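/- Let h ∈ Schwartz(ℝ^n), let u : ℝ^n → ℝ^n be Lipschitz (or with ∇u ∈ L^r), let θ_q ∈ L^∞, and define the commutator [Δ_q, u·∇]θ_q (x) = 2^{qn} ∫ h(2^q(x−y)) (u(y) − u(x))·∇θ_q(y) dy. Then for 1 ≤ r ≤ ∞, ‖[Δ_q, u·∇]θ_q‖_{L^r} ≤ C ‖∇u‖_{L^r} ‖θ_q‖_{L^∞}, with C depending only on h and n (independent of q). -/

import Mathlib

open MeasureTheory ENNReal
open scoped RealInnerProductSpace

open scoped SchwartzMap

/-!
Integrating by parts moves the derivative off `θ` onto the field `y ↦ k (x - y) (u y - u x)`, where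
`k` is the `L¹`-normalised dilation of `h`. Its divergence is a term `∇k (x - y) · (u x - u y)` plus
a term `k (x - y) div u y`. By Minkowski's integral inequality both can be estimated in `L^r` for
each fixed `w = x - y`: the fundamental theorem of calculus along segments gives
`‖u (· - w) - u‖_r ≤ |w| ‖∇u‖_r`. The resulting constant is `‖|w| ∇k‖₁ + n ‖k‖₁`, which is the same
for `k` as for `h`.
-/

section Minkowski

variable {X Y : Type*} [MeasurableSpace X] [MeasurableSpace Y] {μ : Measure X} {ν : Measure Y}

lemma lintegral_rpow_le_lintegral_mul_lintegral_rpow {s : ℝ} (hs : 1 ≤ s) {a c : Y → ℝ≥0∞}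
    (ha : Measurable a) (hc : Measurable c) (hc_top : ∀ᵐ y ∂ν, c y ≠ ⊤)
    (hc_zero : ∀ᵐ y ∂ν, c y = 0 → a y = 0) :
    (∫⁻ y, a y ∂ν) ^ s ≤ (∫⁻ y, a y ^ s * c y ^ (1 - s) ∂ν) * (∫⁻ y, c y ∂ν) ^ (s - 1) := by
  have hs0 : 0 < s := one_pos.trans_le hs
  have factor : ∀ᵐ y ∂ν, a y = (a y ^ s * c y ^ (1 - s)) ^ s⁻¹ * c y ^ (1 - s⁻¹) := by
    filter_upwards [hc_top, hc_zero] with y h_top h_zero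
    rcases eq_or_ne (c y) 0 with h | h
    · simp [h_zero h, hs0]
    · rw [ENNReal.mul_rpow_of_nonneg _ _ (by positivity), ENNReal.rpow_rpow_inv hs0.ne',
        ← ENNReal.rpow_mul, mul_assoc, ← ENNReal.rpow_add _ _ h h_top,
        show (1 - s) * s⁻¹ + (1 - s⁻¹) = 0 by field_simp; ring, ENNReal.rpow_zero, mul_one]
  have holder := ENNReal.lintegral_mul_norm_pow_le (μ := ν)
    (((ha.pow_const s).mul (hc.pow_const (1 - s))).aemeasurable) hc.aemeasurable
    (inv_nonneg.2 hs0.le) (sub_nonneg.2 (inv_le_one_of_one_le₀ hs)) (by ring)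
  calc (∫⁻ y, a y ∂ν) ^ s
      ≤ ((∫⁻ y, a y ^ s * c y ^ (1 - s) ∂ν) ^ s⁻¹ * (∫⁻ y, c y ∂ν) ^ (1 - s⁻¹)) ^ s := by
        rw [lintegral_congr_ae factor]
        exact ENNReal.rpow_le_rpow holder hs0.le
    _ = (∫⁻ y, a y ^ s * c y ^ (1 - s) ∂ν) * (∫⁻ y, c y ∂ν) ^ (s - 1) := by
        rw [ENNReal.mul_rpow_of_nonneg _ _ hs0.le, ENNReal.rpow_inv_rpow hs0.ne',
          ← ENNReal.rpow_mul]
        congr 2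
        field_simp

variable {F : X → Y → ℝ≥0∞}

lemma measurable_eLpNorm_prodMk_right [SFinite μ] (hF : Measurable F.uncurry) (p : ℝ≥0∞) :
    Measurable fun y => eLpNorm (fun x => F x y) p μ := by
  rcases eq_or_ne p 0 with rfl | hp0
  · simp
  rcases eq_or_ne p ⊤ with rfl | hp
  · refine measurable_of_Iic fun a => ?_
    have : (fun y => eLpNorm (fun x => F x y) ⊤ μ) ⁻¹' Set.Iic a =
        {y | μ ((fun x => (x, y)) ⁻¹' {z | a < F.uncurry z}) = 0} := by
      ext y
      have essSup_le_iff : essSup (fun x => F x y) μ ≤ a ↔ ∀ᵐ x ∂μ, F x y ≤ a :=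
        ⟨fun h => (ae_le_essSup _).mono fun _ hx => hx.trans h, essSup_le_of_ae_le a⟩
      simpa [eLpNormEssSup, ae_iff] using essSup_le_iff
    rw [this]
    exact measurable_measure_prodMk_right (measurableSet_lt measurable_const hF)
      (measurableSet_singleton 0)
  · simp only [eLpNorm_eq_lintegral_rpow_enorm_toReal hp0 hp, enorm_eq_self]
    exact (hF.pow_const p.toReal).lintegral_prod_left'.pow_const _

lemma eLpNorm_top_lintegral_le [SFinite μ] [SFinite ν] (hF : Measurable F.uncurry) :
    eLpNorm (fun x => ∫⁻ y, F x y ∂ν) ⊤ μ ≤ ∫⁻ y, eLpNorm (fun x => F x y) ⊤ μ ∂ν := by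
  have hle : ∀ᵐ x ∂μ, ∀ᵐ y ∂ν, F x y ≤ eLpNorm (fun x => F x y) ⊤ μ := by
    have hms : MeasurableSet {z : X × Y | F z.1 z.2 ≤ eLpNorm (fun x => F x z.2) ⊤ μ} :=
      measurableSet_le hF ((measurable_eLpNorm_prodMk_right hF ⊤).comp measurable_snd)
    refine (Measure.ae_ae_comm hms).2 (.of_forall fun y => ?_)
    simpa using enorm_ae_le_eLpNormEssSup (fun x => F x y) μ
  rw [eLpNorm_exponent_top]
  refine eLpNormEssSup_le_of_ae_enorm_bound ?_
  filter_upwards [hle] with x hx using by simpa using lintegral_mono_ae hx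

lemma ae_ae_eq_zero_of_eLpNorm_eq_zero [SFinite μ] [SFinite ν] (hF : Measurable F.uncurry)
    {p : ℝ≥0∞} (hp : p ≠ 0) :
    ∀ᵐ x ∂μ, ∀ᵐ y ∂ν, eLpNorm (fun x => F x y) p μ = 0 → F x y = 0 := by
  have hms : MeasurableSet {z : X × Y | eLpNorm (fun x => F x z.2) p μ = 0 → F z.1 z.2 = 0} :=
    (((measurable_eLpNorm_prodMk_right hF p).comp measurable_snd)
      (measurableSet_singleton 0)).imp (hF (measurableSet_singleton 0))
  refine (Measure.ae_ae_comm hms).2 (.of_forall fun y => ?_)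
  by_cases hy : eLpNorm (fun x => F x y) p μ = 0
  · exact ((eLpNorm_eq_zero_iff hF.of_uncurry_right.aestronglyMeasurable hp).1 hy).mono
      fun x hx _ => hx
  · exact .of_forall fun x h => absurd h hy

lemma rpow_mul_rpow_one_sub_le {s : ℝ} (hs : 0 < s) {c : ℝ≥0∞} (hc : c ≠ ⊤) :
    c ^ s * c ^ (1 - s) ≤ c := by
  rcases eq_or_ne c 0 with rfl | h
  · simp [hs]
  · rw [← ENNReal.rpow_add _ _ h hc, add_sub_cancel, ENNReal.rpow_one]

lemma eLpNorm_lintegral_le [SFinite μ] [SFinite ν] (hF : Measurable F.uncurry) {p : ℝ≥0∞}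
    (hp : 1 ≤ p) :
    eLpNorm (fun x => ∫⁻ y, F x y ∂ν) p μ ≤ ∫⁻ y, eLpNorm (fun x => F x y) p μ ∂ν := by
  rcases eq_or_ne p ⊤ with rfl | hp_top
  · exact eLpNorm_top_lintegral_le hF
  -- No duality: apply Hölder in `y` for fixed `x`, weighted by the target integrand `c`.
  set c : Y → ℝ≥0∞ := fun y => eLpNorm (fun x => F x y) p μ
  rcases eq_or_ne (∫⁻ y, c y ∂ν) ⊤ with hI | hI
  · exact hI ▸ le_top
  have hp0 : p ≠ 0 := (one_pos.trans_le hp).ne'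
  have hc : Measurable c := measurable_eLpNorm_prodMk_right hF p
  set s := p.toReal
  have hs : 1 ≤ s := by simpa using ENNReal.toReal_mono hp_top hp
  have hs0 : 0 < s := one_pos.trans_le hs
  have hc_top : ∀ᵐ y ∂ν, c y ≠ ⊤ := (ae_lt_top hc hI).mono fun _ => ne_of_lt
  have c_rpow (y : Y) : ∫⁻ x, F x y ^ s ∂μ = c y ^ s := by
    simp only [c, eLpNorm_eq_lintegral_rpow_enorm_toReal hp0 hp_top, enorm_eq_self, one_div]
    rw [ENNReal.rpow_inv_rpow hs0.ne']
  rw [eLpNorm_eq_lintegral_rpow_enorm_toReal hp0 hp_top, one_div, ENNReal.rpow_inv_le_iff hs0]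
  simp only [enorm_eq_self]
  calc ∫⁻ x, (∫⁻ y, F x y ∂ν) ^ s ∂μ
      ≤ ∫⁻ x, (∫⁻ y, F x y ^ s * c y ^ (1 - s) ∂ν) * (∫⁻ y, c y ∂ν) ^ (s - 1) ∂μ :=
        lintegral_mono_ae <| (ae_ae_eq_zero_of_eLpNorm_eq_zero hF hp0).mono fun x hx =>
          lintegral_rpow_le_lintegral_mul_lintegral_rpow hs hF.of_uncurry_left hc hc_top hx
    _ = (∫⁻ x, ∫⁻ y, F x y ^ s * c y ^ (1 - s) ∂ν ∂μ) * (∫⁻ y, c y ∂ν) ^ (s - 1) :=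
        lintegral_mul_const' _ _ (ENNReal.rpow_ne_top_of_nonneg (sub_nonneg.2 hs) hI)
    _ = (∫⁻ y, c y ^ s * c y ^ (1 - s) ∂ν) * (∫⁻ y, c y ∂ν) ^ (s - 1) := by
        rw [lintegral_lintegral_swap ((hF.pow_const s).mul
          ((hc.comp measurable_snd).pow_const (1 - s))).aemeasurable]
        congr 2 with y
        rw [lintegral_mul_const _ (hF.of_uncurry_right.pow_const s), c_rpow]
    _ ≤ (∫⁻ y, c y ∂ν) * (∫⁻ y, c y ∂ν) ^ (s - 1) := by
        gcongr ?_ * _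
        exact lintegral_mono_ae (hc_top.mono fun y => rpow_mul_rpow_one_sub_le hs0)
    _ = (∫⁻ y, c y ∂ν) ^ s := by
        nth_rw 1 [← ENNReal.rpow_one (∫⁻ y, c y ∂ν)]
        rw [← ENNReal.rpow_add_of_nonneg _ _ zero_le_one (sub_nonneg.2 hs), add_sub_cancel]

end Minkowski

section Translation

lemma eLpNorm_const_mul_enorm_comp_sub_le {G F : Type*} [AddGroup G] [MeasurableSpace G]
    [MeasurableAdd G] {μ : Measure G} [μ.IsAddRightInvariant] [NormedAddCommGroup F] {f : G → F}
    (hf : AEStronglyMeasurable f μ) (w : G) (c : ℝ≥0∞) (r : ℝ≥0∞) :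
    eLpNorm (fun x => c * ‖f (x - w)‖ₑ) r μ ≤ c * eLpNorm f r μ := by
  have hmp := measurePreserving_sub_right μ w
  rw [← eLpNorm_comp_measurePreserving hf hmp]
  exact eLpNorm_le_mul_eLpNorm_of_ae_le_mul'' r (hf.comp_measurePreserving hmp)
    (.of_forall fun x => le_rfl)

variable {E F : Type*} [NormedAddCommGroup E] [NormedSpace ℝ E] [NormedAddCommGroup F]
  [NormedSpace ℝ F]

lemma enorm_sub_le_lintegral_enorm_deriv {γ : ℝ → F} {K : NNReal} (hγ : LipschitzWith K γ)
    (hd : ∀ᵐ t ∂volume.restrict (Set.Icc (0 : ℝ) 1), DifferentiableAt ℝ γ t) :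
    ‖γ 1 - γ 0‖ₑ ≤ ∫⁻ t in Set.Icc (0 : ℝ) 1, ‖deriv γ t‖ₑ := by
  obtain ⟨L, hL, hL_sub⟩ := exists_dual_vector'' ℝ (γ 1 - γ 0)
  have hac : AbsolutelyContinuousOnInterval (L ∘ γ) 0 1 :=
    (L.lipschitz.comp hγ).lipschitzOnWith.absolutelyContinuousOnInterval
  have hderiv : ∀ᵐ t ∂volume.restrict (Set.Icc (0 : ℝ) 1), ‖deriv (L ∘ γ) t‖ₑ ≤ ‖deriv γ t‖ₑ := by
    filter_upwards [hd] with t ht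
    rw [(L.hasFDerivAt.comp_hasDerivAt t ht.hasDerivAt).deriv, enorm_le_iff_norm_le]
    simpa using L.le_of_opNorm_le hL (deriv γ t)
  calc ‖γ 1 - γ 0‖ₑ = ‖L (γ 1) - L (γ 0)‖ₑ := by
        rw [← map_sub, hL_sub]
        exact (enorm_norm (γ 1 - γ 0)).symm
    _ = ‖∫ t in Set.Icc (0 : ℝ) 1, deriv (L ∘ γ) t‖ₑ := by
        rw [integral_Icc_eq_integral_Ioc, ← intervalIntegral.integral_of_le zero_le_one,
          hac.integral_deriv_eq_sub]
        rfl
    _ ≤ ∫⁻ t in Set.Icc (0 : ℝ) 1, ‖deriv (L ∘ γ) t‖ₑ := enorm_integral_le_lintegral_enorm _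
    _ ≤ ∫⁻ t in Set.Icc (0 : ℝ) 1, ‖deriv γ t‖ₑ := lintegral_mono_ae hderiv

lemma enorm_sub_le_lintegral_enorm_fderiv_segment {u : E → F} {K : NNReal} (hu : LipschitzWith K u)
    {x w : E}
    (hd : ∀ᵐ t ∂volume.restrict (Set.Icc (0 : ℝ) 1), DifferentiableAt ℝ u (x - t • w)) :
    ‖u (x - w) - u x‖ₑ ≤ ∫⁻ t in Set.Icc (0 : ℝ) 1, ‖w‖ₑ * ‖fderiv ℝ u (x - t • w)‖ₑ := by
  have hline (t : ℝ) : HasDerivAt (fun t : ℝ => x - t • w) (-w) t := by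
    simpa using ((hasDerivAt_id t).smul_const w).const_sub x
  have hline_lip : LipschitzWith ‖w‖₊ fun t : ℝ => x - t • w :=
    lipschitzWith_of_nnnorm_deriv_le (fun t => (hline t).differentiableAt)
      fun t => by rw [(hline t).deriv, nnnorm_neg]
  have hcomp (t : ℝ) (ht : DifferentiableAt ℝ u (x - t • w)) :
      HasDerivAt (u ∘ fun t : ℝ => x - t • w) (fderiv ℝ u (x - t • w) (-w)) t :=
    ht.hasFDerivAt.comp_hasDerivAt t (hline t)
  have hftc := enorm_sub_le_lintegral_enorm_deriv (hu.comp hline_lip)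
    (hd.mono fun t ht => (hcomp t ht).differentiableAt)
  refine (by simpa using hftc : ‖u (x - w) - u x‖ₑ ≤ _).trans (lintegral_mono_ae ?_)
  filter_upwards [hd] with t ht
  rw [(hcomp t ht).deriv, mul_comm]
  simpa using (fderiv ℝ u (x - t • w)).le_opENorm (-w)

variable [FiniteDimensional ℝ E] [FiniteDimensional ℝ F] [MeasurableSpace E] [BorelSpace E]

lemma eLpNorm_translate_sub_le (μ : Measure E) [μ.IsAddHaarMeasure] {u : E → F} {K : NNReal}
    (hu : LipschitzWith K u) {r : ℝ≥0∞} (hr : 1 ≤ r) (w : E) :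
    eLpNorm (fun x => u (x - w) - u x) r μ ≤ ‖w‖ₑ * eLpNorm (fderiv ℝ u) r μ := by
  borelize F
  have hdiff : ∀ᵐ x ∂μ, ∀ᵐ t ∂volume.restrict (Set.Icc (0 : ℝ) 1),
      DifferentiableAt ℝ u (x - t • w) := by
    have hms : MeasurableSet {z : E × ℝ | DifferentiableAt ℝ u (z.1 - z.2 • w)} :=
      (by fun_prop : Measurable fun z : E × ℝ => z.1 - z.2 • w)
        (measurableSet_of_differentiableAt ℝ u)
    exact (Measure.ae_ae_comm hms).2 (.of_forall fun t =>
      (measurePreserving_sub_right μ (t • w)).quasiMeasurePreserving.ae hu.ae_differentiableAt)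
  calc eLpNorm (fun x => u (x - w) - u x) r μ
      ≤ eLpNorm (fun x => ∫⁻ t in Set.Icc (0 : ℝ) 1, ‖w‖ₑ * ‖fderiv ℝ u (x - t • w)‖ₑ) r μ :=
        eLpNorm_mono_enorm_ae
          (hdiff.mono fun x hx => enorm_sub_le_lintegral_enorm_fderiv_segment hu hx)
    _ ≤ ∫⁻ t in Set.Icc (0 : ℝ) 1, eLpNorm (fun x => ‖w‖ₑ * ‖fderiv ℝ u (x - t • w)‖ₑ) r μ :=
        eLpNorm_lintegral_le (by unfold Function.uncurry; fun_prop) hr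
    _ ≤ ∫⁻ _ in Set.Icc (0 : ℝ) 1, ‖w‖ₑ * eLpNorm (fderiv ℝ u) r μ := by
        exact lintegral_mono fun t => eLpNorm_const_mul_enorm_comp_sub_le
          (measurable_fderiv ℝ u).aestronglyMeasurable (t • w) ‖w‖ₑ r
    _ = ‖w‖ₑ * eLpNorm (fderiv ℝ u) r μ := by simp

end Translation

section SchwartzMul

lemma norm_le_of_lipschitzWith {E F : Type*} [SeminormedAddCommGroup E] [SeminormedAddCommGroup F]
    {f : E → F} {K : NNReal} (hf : LipschitzWith K f) (y : E) :
    ‖f y‖ ≤ ‖f 0‖ + K * ‖y‖ := by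
  simpa using (norm_le_norm_add_norm_sub (f 0) (f y)).trans
    (add_le_add_right (hf.norm_sub_le 0 y) _)

variable {E F : Type*} [NormedAddCommGroup E] [NormedSpace ℝ E] [NormedAddCommGroup F]
  [NormedSpace ℝ F]

lemma exists_lipschitzWith_schwartzMap (f : 𝓢(E, F)) : ∃ C, LipschitzWith C f :=
  ⟨⟨SchwartzMap.seminorm ℝ 0 0 (SchwartzMap.fderivCLM ℝ E F f), apply_nonneg _ _⟩,
    lipschitzWith_of_nnnorm_fderiv_le f.differentiable fun x =>
      SchwartzMap.norm_le_seminorm ℝ (SchwartzMap.fderivCLM ℝ E F f) x⟩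

lemma exists_norm_sub_mul_norm_le (k : 𝓢(E, ℝ)) :
    ∃ C : ℝ, ∀ y z, ‖k y - k z‖ * ‖y‖ ≤ C * ‖y - z‖ := by
  let P : 𝓢(E, E) := SchwartzMap.bilinLeftCLM (ContinuousLinearMap.lsmul ℝ ℝ)
    (ContinuousLinearMap.id ℝ E).hasTemperateGrowth k
  obtain ⟨C, hP⟩ := exists_lipschitzWith_schwartzMap P
  refine ⟨C + SchwartzMap.seminorm ℝ 0 0 k, fun y z => ?_⟩
  calc ‖k y - k z‖ * ‖y‖ = ‖P y - P z - k z • (y - z)‖ := by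
        rw [← norm_smul]
        congr 1
        simp only [P, SchwartzMap.bilinLeftCLM_apply, ContinuousLinearMap.lsmul_apply,
          ContinuousLinearMap.id_apply]
        module
    _ ≤ ‖P y - P z‖ + ‖k z • (y - z)‖ := norm_sub_le _ _
    _ ≤ C * ‖y - z‖ + SchwartzMap.seminorm ℝ 0 0 k * ‖y - z‖ := by
        rw [norm_smul]
        gcongr
        · exact hP.norm_sub_le y z
        · exact SchwartzMap.norm_le_seminorm ℝ k z
    _ = (C + SchwartzMap.seminorm ℝ 0 0 k) * ‖y - z‖ := by ring

variable {f : E → F} {K : NNReal}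

lemma exists_lipschitzWith_schwartzMap_smul (k : 𝓢(E, ℝ)) (hf : LipschitzWith K f) :
    ∃ D, LipschitzWith D fun y => k y • f y := by
  obtain ⟨C₀, hC₀⟩ := exists_lipschitzWith_schwartzMap k
  obtain ⟨C₁, hC₁⟩ := exists_norm_sub_mul_norm_le k
  set S := SchwartzMap.seminorm ℝ 0 0 k
  refine ⟨_, LipschitzWith.of_dist_le' (K := C₀ * ‖f 0‖ + K * C₁ + S * K) fun y z => ?_⟩
  simp only [dist_eq_norm]
  calc ‖k y • f y - k z • f z‖ = ‖(k y - k z) • f y + k z • (f y - f z)‖ := by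
        congr 1
        module
    _ ≤ ‖k y - k z‖ * ‖f y‖ + ‖k z‖ * ‖f y - f z‖ := by
        simpa only [norm_smul] using norm_add_le ((k y - k z) • f y) (k z • (f y - f z))
    _ ≤ ‖k y - k z‖ * (‖f 0‖ + K * ‖y‖) + S * (K * ‖y - z‖) := by
        gcongr
        · exact norm_le_of_lipschitzWith hf y
        · exact SchwartzMap.norm_le_seminorm ℝ k z
        · exact hf.norm_sub_le y z
    _ = ‖k y - k z‖ * ‖f 0‖ + K * (‖k y - k z‖ * ‖y‖) + S * (K * ‖y - z‖) := by ring
    _ ≤ (C₀ * ‖y - z‖) * ‖f 0‖ + K * (C₁ * ‖y - z‖) + S * (K * ‖y - z‖) := by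
        gcongr ?_ * _ + _ * ?_ + _
        · exact hC₀.norm_sub_le y z
        · exact hC₁ y z
    _ = (C₀ * ‖f 0‖ + K * C₁ + S * K) * ‖y - z‖ := by ring

lemma integrable_schwartzMap_smul [MeasurableSpace E] [BorelSpace E] [SecondCountableTopology E]
    (μ : Measure E) [μ.HasTemperateGrowth] (k : 𝓢(E, ℝ)) (hf : LipschitzWith K f) :
    Integrable (fun y => k y • f y) μ := by
  refine Integrable.mono' ((k.integrable.norm.mul_const ‖f 0‖).add
      ((k.integrable_pow_mul μ 1).const_mul K))
    (k.continuous.smul hf.continuous).aestronglyMeasurable (.of_forall fun y => ?_)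
  calc ‖k y • f y‖ ≤ ‖k y‖ * (‖f 0‖ + K * ‖y‖) := by
        rw [norm_smul]
        gcongr
        exact norm_le_of_lipschitzWith hf y
    _ = ‖k y‖ * ‖f 0‖ + K * (‖y‖ ^ 1 * ‖k y‖) := by ring

end SchwartzMul

section IntegrationByParts

lemma integral_lineDeriv_mul_eq_neg {E : Type*} [NormedAddCommGroup E] [NormedSpace ℝ E]
    [FiniteDimensional ℝ E] [MeasurableSpace E] [BorelSpace E] {μ : Measure E}
    [μ.IsAddHaarMeasure] {f g : E → ℝ} {C D : NNReal} (hf : LipschitzWith C f)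
    (hf_int : Integrable f μ) (hg : LipschitzWith D g) (hg_int : Integrable g μ)
    (hg_top : MemLp g ⊤ μ) (v : E) :
    ∫ x, lineDeriv ℝ f x v * g x ∂μ = -∫ x, f x * lineDeriv ℝ g x v ∂μ := by
  have hlim_f := hf.integral_inv_smul_sub_mul_tendsto_integral_lineDeriv_mul hg_int v
  have hlim_g := hg.integral_inv_smul_sub_mul_tendsto_integral_lineDeriv_mul hf_int (-v)
  have hint (a b : E) : Integrable (fun x => f (x + a) * g (x + b)) μ :=
    (hf_int.comp_add_right a).mul_of_top_left
      (hg_top.comp_measurePreserving (measurePreserving_add_right μ b))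
  have hshift (t : ℝ) : ∫ x, f (x + t • v) * g x ∂μ = ∫ x, f x * g (x + t • -v) ∂μ := by
    rw [← integral_add_right_eq_self _ (t • -v)]
    simp
  have hquot (t : ℝ) : ∫ x, t⁻¹ • (f (x + t • v) - f x) * g x ∂μ =
      ∫ x, t⁻¹ • (g (x + t • -v) - g x) * f x ∂μ := by
    have h₀ := hint 0 0
    have h₁ := hint (t • v) 0
    have h₂ := hint 0 (t • -v)
    simp only [add_zero] at h₀ h₁ h₂
    simp only [smul_eq_mul, mul_assoc, integral_const_mul, sub_mul, mul_comm (g _) (f _)]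
    rw [integral_sub h₁ h₀, integral_sub h₂ h₀, hshift]
  simp only [hquot] at hlim_f
  rw [tendsto_nhds_unique hlim_f hlim_g, ← integral_neg]
  simp [lineDeriv_neg, mul_comm]

variable {E : Type*} [NormedAddCommGroup E] [InnerProductSpace ℝ E]

/-- The divergence of a vector field, as the trace of its Fréchet derivative; it is `0` where the
field is not differentiable. -/
noncomputable def divergence (Φ : E → E) (x : E) : ℝ :=
  LinearMap.trace ℝ E (fderiv ℝ Φ x).toLinearMap

lemma divergence_eq_sum_lineDeriv {ι : Type*} [Fintype ι] (b : OrthonormalBasis ι ℝ E) {Φ : E → E}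
    {x : E} (hΦ : DifferentiableAt ℝ Φ x) :
    divergence Φ x = ∑ i, lineDeriv ℝ (fun y => ⟪b i, Φ y⟫) x (b i) := by
  rw [divergence, LinearMap.trace_eq_sum_inner _ b]
  refine Finset.sum_congr rfl fun i _ => Eq.symm ?_
  exact (((innerSL ℝ (b i)).hasFDerivAt.comp x hΦ.hasFDerivAt).hasLineDerivAt (b i)).lineDeriv

variable [FiniteDimensional ℝ E]

lemma inner_gradient_eq_sum_lineDeriv {ι : Type*} [Fintype ι] (b : OrthonormalBasis ι ℝ E)
    {θ : E → ℝ} {x : E} (hθ : DifferentiableAt ℝ θ x) (v : E) :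
    ⟪v, gradient θ x⟫ = ∑ i, ⟪b i, v⟫ * lineDeriv ℝ θ x (b i) := by
  rw [← b.sum_inner_mul_inner]
  refine Finset.sum_congr rfl fun i _ => ?_
  rw [real_inner_comm, inner_gradient_right, hθ.lineDeriv_eq_fderiv]
  rfl

lemma norm_trace_le (A : E →L[ℝ] E) :
    ‖LinearMap.trace ℝ E A.toLinearMap‖ ≤ Module.finrank ℝ E * ‖A‖ := by
  let b := stdOrthonormalBasis ℝ E
  have hentry (i : Fin (Module.finrank ℝ E)) : ‖⟪b i, A (b i)⟫‖ ≤ ‖A‖ := by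
    simpa using (norm_inner_le_norm (𝕜 := ℝ) (b i) (A (b i))).trans
      (mul_le_mul_of_nonneg_left (A.le_opNorm (b i)) (norm_nonneg _))
  rw [LinearMap.trace_eq_sum_inner _ b]
  simpa using norm_sum_le_of_le Finset.univ fun i _ => hentry i

lemma enorm_divergence_le (Φ : E → E) (x : E) :
    ‖divergence Φ x‖ₑ ≤ Module.finrank ℝ E * ‖fderiv ℝ Φ x‖ₑ := by
  have := ENNReal.ofReal_le_ofReal (norm_trace_le (fderiv ℝ Φ x))
  rwa [ENNReal.ofReal_mul (by positivity), ENNReal.ofReal_natCast, ofReal_norm, ofReal_norm] at this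

lemma divergence_smul {a : E → ℝ} {a' : E →L[ℝ] ℝ} {Φ : E → E} {x : E} (ha : HasFDerivAt a a' x)
    (hΦ : DifferentiableAt ℝ Φ x) :
    divergence (fun y => a y • Φ y) x = a x * divergence Φ x + a' (Φ x) := by
  rw [divergence, (ha.fun_smul hΦ.hasFDerivAt).fderiv]
  simp [divergence]

lemma enorm_divergence_smul_sub_le {k : E → ℝ} {u : E → E} {x y : E}
    (hk : DifferentiableAt ℝ k (x - y)) (hu : DifferentiableAt ℝ u y) (c : E) :
    ‖divergence (fun z => k (x - z) • (u z - c)) y‖ₑ ≤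
      ‖fderiv ℝ k (x - y)‖ₑ * ‖u y - c‖ₑ +
        Module.finrank ℝ E * ‖k (x - y)‖ₑ * ‖fderiv ℝ u y‖ₑ := by
  have hk' : HasFDerivAt (fun z => k (x - z)) (-fderiv ℝ k (x - y)) y := by
    simpa [Function.comp_def] using hk.hasFDerivAt.comp y ((hasFDerivAt_id y).const_sub x)
  have hdiv : ‖divergence (fun z => u z - c) y‖ₑ ≤ Module.finrank ℝ E * ‖fderiv ℝ u y‖ₑ := by
    simpa only [fderiv_sub_const] using enorm_divergence_le (fun z => u z - c) y
  rw [divergence_smul hk' (hu.sub_const c)]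
  calc ‖k (x - y) * divergence (fun z => u z - c) y + (-fderiv ℝ k (x - y)) (u y - c)‖ₑ
      ≤ ‖k (x - y)‖ₑ * ‖divergence (fun z => u z - c) y‖ₑ +
          ‖fderiv ℝ k (x - y)‖ₑ * ‖u y - c‖ₑ := by
        refine (enorm_add_le _ _).trans ?_
        rw [enorm_mul]
        gcongr
        simpa using (-fderiv ℝ k (x - y)).le_opENorm (u y - c)
    _ ≤ ‖k (x - y)‖ₑ * (Module.finrank ℝ E * ‖fderiv ℝ u y‖ₑ) +
          ‖fderiv ℝ k (x - y)‖ₑ * ‖u y - c‖ₑ := by gcongr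
    _ = _ := by ring

variable [MeasurableSpace E] [BorelSpace E]

lemma integral_inner_gradient_eq_neg_integral_divergence_mul {μ : Measure E} [μ.IsAddHaarMeasure]
    {Φ : E → E} {θ : E → ℝ} {C D : NNReal} (hΦ : LipschitzWith C Φ) (hΦ_int : Integrable Φ μ)
    (hθ : LipschitzWith D θ) (hθ_int : Integrable θ μ) (hθ_top : MemLp θ ⊤ μ) :
    ∫ x, ⟪Φ x, gradient θ x⟫ ∂μ = -∫ x, divergence Φ x * θ x ∂μ := by
  let b := stdOrthonormalBasis ℝ E
  have hφ (i) : LipschitzWith (‖innerSL ℝ (b i)‖₊ * C) fun x => ⟪b i, Φ x⟫ :=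
    (innerSL ℝ (b i)).lipschitz.comp hΦ
  have hφ_int (i) : Integrable (fun x => ⟪b i, Φ x⟫) μ := hΦ_int.const_inner (b i)
  have hdiv_int (i) : Integrable (fun x => lineDeriv ℝ (fun y => ⟪b i, Φ y⟫) x (b i) * θ x) μ :=
    hθ_int.mul_of_top_right ((hφ i).memLp_lineDeriv (b i))
  calc ∫ x, ⟪Φ x, gradient θ x⟫ ∂μ
      = ∫ x, ∑ i, ⟪b i, Φ x⟫ * lineDeriv ℝ θ x (b i) ∂μ :=
        integral_congr_ae <| hθ.ae_differentiableAt.mono fun x hx =>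
          inner_gradient_eq_sum_lineDeriv b hx (Φ x)
    _ = ∑ i, ∫ x, ⟪b i, Φ x⟫ * lineDeriv ℝ θ x (b i) ∂μ :=
        integral_finsetSum _ fun i _ => (hφ_int i).mul_of_top_left (hθ.memLp_lineDeriv (b i))
    _ = ∑ i, -∫ x, lineDeriv ℝ (fun y => ⟪b i, Φ y⟫) x (b i) * θ x ∂μ := by
        simp only [integral_lineDeriv_mul_eq_neg (hφ _) (hφ_int _) hθ hθ_int hθ_top, neg_neg]
    _ = -∫ x, ∑ i, lineDeriv ℝ (fun y => ⟪b i, Φ y⟫) x (b i) * θ x ∂μ := by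
        rw [integral_finsetSum _ fun i _ => hdiv_int i, Finset.sum_neg_distrib]
    _ = -∫ x, divergence Φ x * θ x ∂μ := by
        congr 1
        refine integral_congr_ae <| hΦ.ae_differentiableAt.mono fun x hx => ?_
        simp only [divergence_eq_sum_lineDeriv b hx, Finset.sum_mul]

end IntegrationByParts

section Commutator

variable {E : Type*} [NormedAddCommGroup E] [InnerProductSpace ℝ E] [FiniteDimensional ℝ E]
  [MeasurableSpace E]

/-- The commutator `[k ⋆ ·, u · ∇] θ`, where `k ⋆ ·` is convolution with the kernel `k`; the two
terms `k ⋆ (u · ∇θ)` and `u · ∇(k ⋆ θ) = u · (k ⋆ ∇θ)` are combined under one integral. -/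
noncomputable def convCommutator (μ : Measure E) (k : E → ℝ) (u : E → E) (θ : E → ℝ) (x : E) : ℝ :=
  ∫ y, k (x - y) * ⟪u y - u x, gradient θ y⟫ ∂μ

/-- The constant `‖|w| ∇k‖₁ + n ‖k‖₁` of the commutator estimate for the kernel `k`. -/
noncomputable def commutatorBound (μ : Measure E) (k : E → ℝ) : ℝ≥0∞ :=
  ∫⁻ w, (‖fderiv ℝ k w‖ₑ * ‖w‖ₑ + Module.finrank ℝ E * ‖k w‖ₑ) ∂μ

variable [BorelSpace E] {μ : Measure E} [μ.IsAddHaarMeasure]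

lemma commutatorBound_schwartzMap_ne_top (k : 𝓢(E, ℝ)) : commutatorBound μ k ≠ ⊤ := by
  have hDk : Integrable (fun w => ‖fderiv ℝ k w‖ * ‖w‖) μ := by
    simpa [mul_comm] using (SchwartzMap.fderivCLM ℝ E ℝ k).integrable_pow_mul μ 1
  have hk : Integrable (fun w => Module.finrank ℝ E * ‖k w‖) μ := k.integrable.norm.const_mul _
  have hsum (w : E) : ‖‖fderiv ℝ k w‖ * ‖w‖ + Module.finrank ℝ E * ‖k w‖‖ₑ =
      ‖fderiv ℝ k w‖ₑ * ‖w‖ₑ + Module.finrank ℝ E * ‖k w‖ₑ := by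
    rw [Real.enorm_of_nonneg (by positivity), ENNReal.ofReal_add (by positivity) (by positivity),
      ENNReal.ofReal_mul (by positivity), ENNReal.ofReal_mul (by positivity)]
    simp only [ofReal_norm, ENNReal.ofReal_natCast]
  rw [commutatorBound, ← lintegral_congr hsum]
  exact (hDk.add hk).2.ne

variable {u : E → E} {θ : E → ℝ} {K D : NNReal}

lemma convCommutator_eq_neg_integral_divergence_mul (k : 𝓢(E, ℝ)) (hu : LipschitzWith K u)
    (hθ : LipschitzWith D θ) (hθ_int : Integrable θ μ) (hθ_top : MemLp θ ⊤ μ) (x : E) :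
    convCommutator μ k u θ x =
      -∫ y, divergence (fun z => k (x - z) • (u z - u x)) y * θ y ∂μ := by
  have hreflect : LipschitzWith 1 (x - ·) := (IsometryEquiv.subLeft x).isometry.lipschitz
  have hv : LipschitzWith K fun w => u (x - w) - u x := by
    simpa using (hu.comp hreflect).sub (LipschitzWith.const (u x))
  obtain ⟨C, hC⟩ := exists_lipschitzWith_schwartzMap_smul k hv
  have hΦ : LipschitzWith C fun y => k (x - y) • (u y - u x) := by
    simpa [Function.comp_def] using hC.comp hreflect
  have hΦ_int : Integrable (fun y => k (x - y) • (u y - u x)) μ := by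
    simpa using (integrable_schwartzMap_smul μ k hv).comp_sub_left x
  simp only [convCommutator, ← real_inner_smul_left]
  exact integral_inner_gradient_eq_neg_integral_divergence_mul hΦ hΦ_int hθ hθ_int hθ_top

lemma enorm_convCommutator_le (k : 𝓢(E, ℝ)) (hu : LipschitzWith K u) (hθ : LipschitzWith D θ)
    (hθ_int : Integrable θ μ) (hθ_top : MemLp θ ⊤ μ) (x : E) :
    ‖convCommutator μ k u θ x‖ₑ ≤ eLpNorm θ ⊤ μ *
      ∫⁻ w, (‖fderiv ℝ k w‖ₑ * ‖u (x - w) - u x‖ₑ +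
        Module.finrank ℝ E * ‖k w‖ₑ * ‖fderiv ℝ u (x - w)‖ₑ) ∂μ := by
  set G : E → ℝ≥0∞ := fun w => ‖fderiv ℝ k w‖ₑ * ‖u (x - w) - u x‖ₑ +
    Module.finrank ℝ E * ‖k w‖ₑ * ‖fderiv ℝ u (x - w)‖ₑ
  have hG : ∀ᵐ y ∂μ, ‖divergence (fun z => k (x - z) • (u z - u x)) y‖ₑ ≤ G (x - y) :=
    hu.ae_differentiableAt.mono fun y hy => by
      simpa [G] using enorm_divergence_smul_sub_le k.differentiable.differentiableAt hy (u x)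
  have hθ_le : ∀ᵐ y ∂μ, ‖θ y‖ₑ ≤ eLpNorm θ ⊤ μ := enorm_ae_le_eLpNormEssSup θ μ
  rw [convCommutator_eq_neg_integral_divergence_mul k hu hθ hθ_int hθ_top, enorm_neg]
  calc ‖∫ y, divergence (fun z => k (x - z) • (u z - u x)) y * θ y ∂μ‖ₑ
      ≤ ∫⁻ y, ‖divergence (fun z => k (x - z) • (u z - u x)) y * θ y‖ₑ ∂μ :=
        enorm_integral_le_lintegral_enorm _
    _ ≤ ∫⁻ y, eLpNorm θ ⊤ μ * G (x - y) ∂μ := by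
        refine lintegral_mono_ae ?_
        filter_upwards [hG, hθ_le] with y hGy hθy
        rw [enorm_mul, mul_comm]
        exact mul_le_mul' hθy hGy
    _ = eLpNorm θ ⊤ μ * ∫⁻ w, G w ∂μ := by
        rw [lintegral_const_mul' _ _ hθ_top.2.ne, lintegral_sub_left_eq_self G x]

lemma eLpNorm_convCommutator_le (k : 𝓢(E, ℝ)) (hu : LipschitzWith K u) (hθ : LipschitzWith D θ)
    (hθ_int : Integrable θ μ) (hθ_top : MemLp θ ⊤ μ) {r : ℝ≥0∞} (hr : 1 ≤ r) :
    eLpNorm (convCommutator μ k u θ) r μ ≤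
      commutatorBound μ k * eLpNorm (fderiv ℝ u) r μ * eLpNorm θ ⊤ μ := by
  have hu_meas : Measurable u := hu.continuous.measurable
  have hk : Measurable k := k.continuous.measurable
  set G₁ : E → E → ℝ≥0∞ := fun x w => ‖fderiv ℝ k w‖ₑ * ‖u (x - w) - u x‖ₑ
  set G₂ : E → E → ℝ≥0∞ := fun x w => Module.finrank ℝ E * ‖k w‖ₑ * ‖fderiv ℝ u (x - w)‖ₑ
  have hG₁ : Measurable G₁.uncurry := by unfold G₁ Function.uncurry; fun_prop
  have hG₂ : Measurable G₂.uncurry := by unfold G₂ Function.uncurry; fun_prop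
  have hG₁_le (w : E) : eLpNorm (fun x => G₁ x w) r μ ≤
      ‖fderiv ℝ k w‖ₑ * (‖w‖ₑ * eLpNorm (fderiv ℝ u) r μ) := by
    refine le_trans ?_ (mul_le_mul_right (eLpNorm_translate_sub_le μ hu hr w) _)
    exact eLpNorm_le_mul_eLpNorm_of_ae_le_mul'' r (by fun_prop) (.of_forall fun x => le_rfl)
  have hG₂_le (w : E) : eLpNorm (fun x => G₂ x w) r μ ≤
      Module.finrank ℝ E * ‖k w‖ₑ * eLpNorm (fderiv ℝ u) r μ :=
    eLpNorm_const_mul_enorm_comp_sub_le (measurable_fderiv ℝ u).aestronglyMeasurable w _ r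
  calc eLpNorm (convCommutator μ k u θ) r μ
      ≤ eLpNorm θ ⊤ μ * eLpNorm (fun x => ∫⁻ w, (G₁ x w + G₂ x w) ∂μ) r μ :=
        eLpNorm_le_mul_eLpNorm_of_ae_le_mul'' r
          (hG₁.add hG₂).lintegral_prod_right'.aestronglyMeasurable
          (.of_forall fun x => by simpa using enorm_convCommutator_le k hu hθ hθ_int hθ_top x)
    _ ≤ eLpNorm θ ⊤ μ * ∫⁻ w, eLpNorm (fun x => G₁ x w + G₂ x w) r μ ∂μ := by
        gcongr
        exact eLpNorm_lintegral_le (F := fun x w => G₁ x w + G₂ x w) (hG₁.add hG₂) hr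
    _ ≤ eLpNorm θ ⊤ μ * ∫⁻ w, (‖fderiv ℝ k w‖ₑ * ‖w‖ₑ + Module.finrank ℝ E * ‖k w‖ₑ) *
          eLpNorm (fderiv ℝ u) r μ ∂μ := by
        gcongr with w
        rw [add_mul, mul_assoc ‖fderiv ℝ k w‖ₑ]
        exact (eLpNorm_add_le hG₁.of_uncurry_right.aestronglyMeasurable
          hG₂.of_uncurry_right.aestronglyMeasurable hr).trans (add_le_add (hG₁_le w) (hG₂_le w))
    _ = commutatorBound μ k * eLpNorm (fderiv ℝ u) r μ * eLpNorm θ ⊤ μ := by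
        rw [lintegral_mul_const _ (by fun_prop), mul_comm, commutatorBound]

end Commutator

section Dilation

variable {E : Type*} [NormedAddCommGroup E]

/-- The dilation `|R|ⁿ h(R ·)` of a Schwartz function, which preserves its `L¹` norm. -/
noncomputable def l1Dilation [NormedSpace ℝ E] (R : ℝˣ) (h : 𝓢(E, ℝ)) : 𝓢(E, ℝ) :=
  |(R : ℝ)| ^ Module.finrank ℝ E •
    SchwartzMap.compCLMOfContinuousLinearEquiv ℝ (ContinuousLinearEquiv.smulLeft R) h

lemma l1Dilation_apply [NormedSpace ℝ E] (R : ℝˣ) (h : 𝓢(E, ℝ)) (x : E) :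
    l1Dilation R h x = |(R : ℝ)| ^ Module.finrank ℝ E * h ((R : ℝ) • x) :=
  rfl

lemma fderiv_l1Dilation [NormedSpace ℝ E] (R : ℝˣ) (h : 𝓢(E, ℝ)) (x : E) :
    fderiv ℝ (l1Dilation R h) x =
      |(R : ℝ)| ^ Module.finrank ℝ E • (R : ℝ) • fderiv ℝ h ((R : ℝ) • x) := by
  rw [← fderiv_comp_smul, ← fderiv_const_smul (by fun_prop)]
  rfl

lemma lintegral_enorm_pow_mul_comp_smul [NormedSpace ℝ E] [FiniteDimensional ℝ E]
    [MeasurableSpace E] [BorelSpace E] (μ : Measure E) [μ.IsAddHaarMeasure] (R : ℝˣ)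
    (g : E → ℝ≥0∞) :
    ∫⁻ x, ‖(R : ℝ)‖ₑ ^ Module.finrank ℝ E * g ((R : ℝ) • x) ∂μ = ∫⁻ x, g x ∂μ := by
  have hjacobian : ‖(R : ℝ)‖ₑ ^ Module.finrank ℝ E *
      ENNReal.ofReal |((R : ℝ) ^ Module.finrank ℝ E)⁻¹| = 1 := by
    rw [← Real.enorm_eq_ofReal_abs, ← enorm_pow, ← enorm_mul, mul_inv_cancel₀ (by simp), enorm_one]
  rw [lintegral_const_mul' _ _ (by finiteness),
    ← (measurableEmbedding_const_smul₀ R.ne_zero).lintegral_map,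
    Measure.map_addHaar_smul _ R.ne_zero, lintegral_smul_measure, smul_eq_mul, ← mul_assoc,
    hjacobian, one_mul]

variable [InnerProductSpace ℝ E] [FiniteDimensional ℝ E] [MeasurableSpace E] [BorelSpace E]

lemma commutatorBound_l1Dilation (μ : Measure E) [μ.IsAddHaarMeasure] (R : ℝˣ) (h : 𝓢(E, ℝ)) :
    commutatorBound μ (l1Dilation R h) = commutatorBound μ h := by
  conv_rhs => rw [commutatorBound, ← lintegral_enorm_pow_mul_comp_smul μ R]
  refine lintegral_congr fun w => ?_
  simp only [fderiv_l1Dilation, l1Dilation_apply, enorm_smul, enorm_mul, enorm_pow, Real.enorm_abs]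
  ring

end Dilation

theorem stmt_7_general {E : Type*} [NormedAddCommGroup E] [InnerProductSpace ℝ E]
    [FiniteDimensional ℝ E] [MeasurableSpace E] [BorelSpace E] (μ : Measure E)
    [μ.IsAddHaarMeasure] (h : 𝓢(E, ℝ)) :
    ∃ C : ℝ, 0 < C ∧ ∀ (R : ℝ) (r : ℝ≥0∞), R ≠ 0 → 1 ≤ r →
      ∀ (u : E → E) (K : NNReal), LipschitzWith K u →
        ∀ (θ : E → ℝ) (D : NNReal), LipschitzWith D θ → Integrable θ μ → MemLp θ ⊤ μ →
          eLpNorm (fun x => |R| ^ Module.finrank ℝ E *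
              ∫ y, h (R • (x - y)) * ⟪u y - u x, gradient θ y⟫ ∂μ) r μ ≤
            ENNReal.ofReal C * eLpNorm (fderiv ℝ u) r μ * eLpNorm θ ⊤ μ := by
  refine ⟨(commutatorBound μ h).toReal + 1, by positivity, ?_⟩
  intro R r hR hr u K hu θ D hθ hθ_int hθ_top
  have hbound : commutatorBound μ h ≤ ENNReal.ofReal ((commutatorBound μ h).toReal + 1) := by
    rw [ENNReal.le_ofReal_iff_toReal_le (commutatorBound_schwartzMap_ne_top h) (by positivity)]
    exact le_add_of_nonneg_right zero_le_one
  have hkernel (x : E) : convCommutator μ (l1Dilation (Units.mk0 R hR) h) u θ x =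
      |R| ^ Module.finrank ℝ E * ∫ y, h (R • (x - y)) * ⟪u y - u x, gradient θ y⟫ ∂μ := by
    simp only [convCommutator, l1Dilation_apply, Units.val_mk0, mul_assoc, integral_const_mul]
  calc eLpNorm (fun x => |R| ^ Module.finrank ℝ E *
          ∫ y, h (R • (x - y)) * ⟪u y - u x, gradient θ y⟫ ∂μ) r μ
      = eLpNorm (convCommutator μ (l1Dilation (Units.mk0 R hR) h) u θ) r μ := by
        simp only [← hkernel]
    _ ≤ commutatorBound μ h * eLpNorm (fderiv ℝ u) r μ * eLpNorm θ ⊤ μ := by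
        rw [← commutatorBound_l1Dilation μ (Units.mk0 R hR) h]
        exact eLpNorm_convCommutator_le _ hu hθ hθ_int hθ_top hr
    _ ≤ _ := by gcongr

/-- Commutator estimate: for `h` Schwartz on `ℝⁿ` there is `C > 0` (depending only on `h`
and `n`, not on `q`) such that for every `1 ≤ r ≤ ∞`, every Lipschitz vector field `u`
and every Schwartz `θ`, the commutator
`[Δ_q, u·∇]θ (x) = 2^{qn} ∫ h(2^q(x-y)) (u(y)-u(x))·∇θ(y) dy` satisfies
`‖[Δ_q, u·∇]θ‖_{L^r} ≤ C ‖∇u‖_{L^r} ‖θ‖_{L^∞}`. -/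
theorem stmt_7 (n : ℕ) (hn : 0 < n)
    (h : SchwartzMap (EuclideanSpace ℝ (Fin n)) ℝ) :
    ∃ C : ℝ, 0 < C ∧
      ∀ (q : ℤ) (r : ℝ≥0∞), 1 ≤ r →
        ∀ (u : EuclideanSpace ℝ (Fin n) → EuclideanSpace ℝ (Fin n)) (K : NNReal),
          LipschitzWith K u →
          ∀ θ : SchwartzMap (EuclideanSpace ℝ (Fin n)) ℝ,
            eLpNorm
                (fun x => (2 : ℝ) ^ ((q : ℝ) * (n : ℝ)) *
                  ∫ y, h ((2 : ℝ) ^ ((q : ℝ)) • (x - y)) * ⟪u y - u x, gradient (⇑θ) y⟫)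
                r (volume : Measure (EuclideanSpace ℝ (Fin n))) ≤
              ENNReal.ofReal C *
                eLpNorm (fun x => ‖fderiv ℝ u x‖) r
                  (volume : Measure (EuclideanSpace ℝ (Fin n))) *
                eLpNorm (⇑θ) ⊤ (volume : Measure (EuclideanSpace ℝ (Fin n))) := by
  obtain ⟨C, hC, hbound⟩ := stmt_7_general volume h
  refine ⟨C, hC, fun q r hr u K hu θ => ?_⟩
  obtain ⟨D, hD⟩ := exists_lipschitzWith_schwartzMap θ
  simpa [Real.rpow_mul, eLpNorm_norm] using
    hbound (2 ^ (q : ℝ)) r (by positivity) hr u K hu θ D hD θ.integrable (θ.memLp ⊤)
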